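/- arXiv:2208.09690 — 6 statements merged into one kernel-verified Lean document; each statement's English description precedes it below -/
import Mathlib

section
/- (Theorem 3.1, second equality.) Under Assumption A, the λ-minimization can be moved outside: inf_{x∈X} sup{ f(x,y) : y ∈ Y, g(x,y) ≥ 0 } = inf{ inf_{x∈X} sup_{y∈Y} L(x,y,λ) : λ ∈ ℝ^K, λ ≥ 0 }. -/
/-- **Lagrangian strong duality under Slater's condition.** If `p` bounds a concave objective `f`
on the feasible set cut out of `Y` by concave constraints `g k ≥ 0`, and some point of `Y` is
strictly feasible, then `p` bounds a Lagrangian with nonnegative multipliers on all of `Y`. -/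
theorem exists_multiplier_of_slater {E ι : Type*} [AddCommGroup E] [Module ℝ E] [Fintype ι]
    {Y : Set E} {f : E → ℝ} {g : ι → E → ℝ} {p : ℝ}
    (hf : ConcaveOn ℝ Y f) (hg : ∀ k, ConcaveOn ℝ Y (g k))
    (slater : ∃ y ∈ Y, ∀ k, 0 < g k y)
    (hp : ∀ y ∈ Y, (∀ k, 0 ≤ g k y) → f y ≤ p) :
    ∃ lam : ι → ℝ, (∀ k, 0 ≤ lam k) ∧ ∀ y ∈ Y, f y + ∑ k, lam k * g k y ≤ p := by
  classical
  obtain ⟨y₀, hy₀, hg₀⟩ := slater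
  let A : Set ((ι → ℝ) × ℝ) := {a | ∃ y ∈ Y, (∀ k, a.1 k < g k y) ∧ a.2 < f y}
  have hAopen : IsOpen A := by
    have hA : A = ⋃ y ∈ Y, {a : (ι → ℝ) × ℝ | (∀ k, a.1 k < g k y) ∧ a.2 < f y} := by
      ext a
      simp only [A, Set.mem_iUnion, Set.mem_ofPred_eq, exists_prop]
    rw [hA]
    refine isOpen_biUnion fun y _ => ?_
    refine IsOpen.and ?_ (isOpen_lt (by fun_prop) (by fun_prop))
    simp only [Set.ofPred_forall]
    exact isOpen_iInter_of_finite fun k => isOpen_lt (by fun_prop) (by fun_prop)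
  have hAconv : Convex ℝ A := by
    rw [convex_iff_forall_pos]
    rintro a ⟨y, hy, hga, hfa⟩ b ⟨z, hz, hgb, hfb⟩ s t hs ht hst
    refine ⟨s • y + t • z, hf.1 hy hz hs.le ht.le hst, fun k => ?_, ?_⟩
    · refine lt_of_lt_of_le ?_ ((hg k).2 hy hz hs.le ht.le hst)
      simpa using add_lt_add (mul_lt_mul_of_pos_left (hga k) hs)
        (mul_lt_mul_of_pos_left (hgb k) ht)
    · refine lt_of_lt_of_le ?_ (hf.2 hy hz hs.le ht.le hst)
      simpa using add_lt_add (mul_lt_mul_of_pos_left hfa hs) (mul_lt_mul_of_pos_left hfb ht)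
  have hnot : ((0, p) : (ι → ℝ) × ℝ) ∉ A := by
    rintro ⟨y, hy, hgy, hfy⟩
    exact (hp y hy fun k => (hgy k).le).not_gt hfy
  obtain ⟨φ, hφ⟩ := geometric_hahn_banach_open_point hAconv hAopen hnot
  set μ : ι → ℝ := fun k => φ (Pi.single k 1, 0) with hμ
  set α : ℝ := φ (0, 1) with hα
  have hφ_eq (u : ι → ℝ) (t : ℝ) : φ (u, t) = ∑ k, u k * μ k + t * α := by
    have hu : φ (u, 0) = ∑ k, u k * μ k := by
      have hsingle (k : ι) : (Pi.single k 1 : ι → ℝ) = fun j => if k = j then 1 else 0 := by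
        ext j
        simp [Pi.single_apply, eq_comm]
      simpa [hμ, hsingle] using LinearMap.pi_apply_eq_sum_univ
        (φ.toLinearMap ∘ₗ LinearMap.inl ℝ (ι → ℝ) ℝ) u
    have ht : φ (0, t) = t * α := by
      rw [hα, ← smul_eq_mul, ← map_smul]
      simp
    rw [← hu, ← ht, ← map_add]
    simp
  have hsep (y : E) (hy : y ∈ Y) (u : ι → ℝ) (t : ℝ) (hu : ∀ k, u k < g k y) (ht : t < f y) :
      ∑ k, u k * μ k + t * α < p * α := by
    have := hφ (u, t) ⟨y, hy, hu, ht⟩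
    simpa [hφ_eq] using this
  have hα_nonneg : 0 ≤ α := by
    by_contra! hneg
    have h := hsep y₀ hy₀ 0 (min p (f y₀ - 1)) hg₀ (by linarith [min_le_right p (f y₀ - 1)])
    simp only [Pi.zero_apply, zero_mul, Finset.sum_const_zero, zero_add] at h
    nlinarith [min_le_left p (f y₀ - 1)]
  have hα_pos : 0 < α := by
    refine lt_of_le_of_ne hα_nonneg fun h0 => ?_
    have h := hsep y₀ hy₀ 0 (f y₀ - 1) hg₀ (by linarith)
    simp [← h0] at h
  have hμ_nonneg (k : ι) : 0 ≤ μ k := by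
    by_contra! hneg
    have hs : 0 ≤ |(p - (f y₀ - 1)) * α / -μ k| := abs_nonneg _
    have h := hsep y₀ hy₀ (Pi.single k (-|(p - (f y₀ - 1)) * α / -μ k|)) (f y₀ - 1)
      (fun j => lt_of_le_of_lt (by
        rcases eq_or_ne j k with rfl | hjk
        · simp
        · simp [hjk]) (hg₀ j)) (by linarith)
    have hle := le_abs_self ((p - (f y₀ - 1)) * α / -μ k)
    rw [div_le_iff₀ (by linarith)] at hle
    simp only [Pi.single_apply, ite_mul, zero_mul, Finset.sum_ite_eq',
      Finset.mem_univ, if_true] at h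
    linarith
  refine ⟨fun k => μ k / α, fun k => div_nonneg (hμ_nonneg k) hα_nonneg, fun y hy => ?_⟩
  have hclosed : ∑ k, g k y * μ k + f y * α ≤ p * α := by
    have hS : 0 < ∑ k, μ k + α := add_pos_of_nonneg_of_pos
      (Finset.sum_nonneg fun k _ => hμ_nonneg k) hα_pos
    refine le_of_forall_pos_lt_add fun ε hε => ?_
    have hδ : 0 < ε / (∑ k, μ k + α) := div_pos hε hS
    have h := hsep y hy (fun k => g k y - ε / (∑ k, μ k + α)) (f y - ε / (∑ k, μ k + α))
      (fun k => by linarith) (by linarith)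
    simp only [sub_mul, Finset.sum_sub_distrib, ← Finset.mul_sum] at h
    have hε_eq : ε / (∑ k, μ k + α) * (∑ k, μ k + α) = ε := div_mul_cancel₀ _ hS.ne'
    linarith
  have hsum : (∑ k, μ k / α * g k y) * α = ∑ k, g k y * μ k := by
    rw [Finset.sum_mul]
    refine Finset.sum_congr rfl fun k _ => ?_
    field_simp
  refine le_of_mul_le_mul_right ?_ hα_pos
  rw [add_mul, hsum]
  linarith

/-- **Theorem 3.1, second equality.**  Under Assumption A (Slater's condition plus
convexity in `x` and concavity in `y` of `f` and each `g k`), the λ-minimization can be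
moved outside:
`inf_{x∈X} sup {f x y : y ∈ Y, g x y ≥ 0}
  = inf_{λ ≥ 0} inf_{x∈X} sup_{y∈Y} (f x y + ∑ k, λ k * g k x y)`. -/
theorem minmax_stackelberg_eq_min_lambda_outside {n m K : ℕ}
    (X : Set (EuclideanSpace ℝ (Fin n))) (Y : Set (EuclideanSpace ℝ (Fin m)))
    (hXne : X.Nonempty) (hXcomp : IsCompact X) (hXconv : Convex ℝ X)
    (hYne : Y.Nonempty) (hYcomp : IsCompact Y) (hYconv : Convex ℝ Y)
    (f : EuclideanSpace ℝ (Fin n) → EuclideanSpace ℝ (Fin m) → ℝ)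
    (g : Fin K → EuclideanSpace ℝ (Fin n) → EuclideanSpace ℝ (Fin m) → ℝ)
    (hf_cont : ContinuousOn (fun p : EuclideanSpace ℝ (Fin n) × EuclideanSpace ℝ (Fin m) =>
      f p.1 p.2) (X ×ˢ Y))
    (hg_cont : ∀ k, ContinuousOn (fun p : EuclideanSpace ℝ (Fin n) × EuclideanSpace ℝ (Fin m) =>
      g k p.1 p.2) (X ×ˢ Y))
    (slater : ∀ x ∈ X, ∃ yhat ∈ Y, ∀ k, 0 < g k x yhat)
    (hf_convx : ∀ y ∈ Y, ConvexOn ℝ X (fun x => f x y))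
    (hf_concy : ∀ x ∈ X, ConcaveOn ℝ Y (fun y => f x y))
    (hg_convx : ∀ k, ∀ y ∈ Y, ConvexOn ℝ X (fun x => g k x y))
    (hg_concy : ∀ k, ∀ x ∈ X, ConcaveOn ℝ Y (fun y => g k x y)) :
    sInf {v : ℝ | ∃ x ∈ X, v = sSup {w : ℝ | ∃ y ∈ Y, (∀ k, 0 ≤ g k x y) ∧ w = f x y}}
      = sInf {v : ℝ | ∃ lam : Fin K → ℝ, (∀ k, 0 ≤ lam k) ∧
          v = sInf {w : ℝ | ∃ x ∈ X, w = sSup {u : ℝ | ∃ y ∈ Y,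
            u = f x y + ∑ k, lam k * g k x y}}} := by
  obtain ⟨c, hc⟩ := ((hXcomp.prod hYcomp).image_of_continuousOn hf_cont).bddBelow
  have hc' (x) (hx : x ∈ X) (y) (hy : y ∈ Y) : c ≤ f x y := hc ⟨(x, y), ⟨hx, hy⟩, rfl⟩
  have hL_bdd (lam : Fin K → ℝ) (x) (hx : x ∈ X) :
      BddAbove {u : ℝ | ∃ y ∈ Y, u = f x y + ∑ k, lam k * g k x y} := by
    have hslice : ContinuousOn (fun y : EuclideanSpace ℝ (Fin m) => (x, y)) Y := by fun_prop
    have hmaps : Set.MapsTo (fun y : EuclideanSpace ℝ (Fin m) => (x, y)) Y (X ×ˢ Y) :=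
      fun y hy => ⟨hx, hy⟩
    have hcont : ContinuousOn (fun y => f x y + ∑ k, lam k * g k x y) Y :=
      (hf_cont.comp hslice hmaps).add (continuousOn_finsetSum _ fun k _ =>
        continuousOn_const.mul ((hg_cont k).comp hslice hmaps))
    refine (hYcomp.image_of_continuousOn hcont).bddAbove.mono ?_
    rintro _ ⟨y, hy, rfl⟩
    exact ⟨y, hy, rfl⟩
  have hP_bdd (x) (hx : x ∈ X) :
      BddAbove {w : ℝ | ∃ y ∈ Y, (∀ k, 0 ≤ g k x y) ∧ w = f x y} := by
    refine (hL_bdd 0 x hx).mono ?_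
    rintro _ ⟨y, hy, -, rfl⟩
    exact ⟨y, hy, by simp⟩
  have hP_lb (x) (hx : x ∈ X) :
      c ≤ sSup {w : ℝ | ∃ y ∈ Y, (∀ k, 0 ≤ g k x y) ∧ w = f x y} := by
    obtain ⟨y, hy, hgy⟩ := slater x hx
    exact (hc' x hx y hy).trans (le_csSup (hP_bdd x hx) ⟨y, hy, fun k => (hgy k).le, rfl⟩)
  have hweak (lam : Fin K → ℝ) (hlam : ∀ k, 0 ≤ lam k) (x) (hx : x ∈ X) :
      sSup {w : ℝ | ∃ y ∈ Y, (∀ k, 0 ≤ g k x y) ∧ w = f x y} ≤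
        sSup {u : ℝ | ∃ y ∈ Y, u = f x y + ∑ k, lam k * g k x y} := by
    obtain ⟨y₀, hy₀, hg₀⟩ := slater x hx
    refine csSup_le ⟨_, y₀, hy₀, fun k => (hg₀ k).le, rfl⟩ ?_
    rintro _ ⟨y, hy, hgy, rfl⟩
    refine le_csSup_of_le (hL_bdd lam x hx) ⟨y, hy, rfl⟩ ?_
    exact le_add_of_nonneg_right (Finset.sum_nonneg fun k _ => mul_nonneg (hlam k) (hgy k))
  have hP_inf_bdd : BddBelow {v : ℝ | ∃ x ∈ X,
      v = sSup {w : ℝ | ∃ y ∈ Y, (∀ k, 0 ≤ g k x y) ∧ w = f x y}} := by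
    refine ⟨c, ?_⟩
    rintro _ ⟨x, hx, rfl⟩
    exact hP_lb x hx
  have hD_inf_bdd (lam : Fin K → ℝ) (hlam : ∀ k, 0 ≤ lam k) : c ∈ lowerBounds {w : ℝ | ∃ x ∈ X,
      w = sSup {u : ℝ | ∃ y ∈ Y, u = f x y + ∑ k, lam k * g k x y}} := by
    rintro _ ⟨x, hx, rfl⟩
    exact (hP_lb x hx).trans (hweak lam hlam x hx)
  obtain ⟨x₀, hx₀⟩ := hXne
  apply le_antisymm
  · refine le_csInf ⟨_, 0, fun _ => le_rfl, rfl⟩ ?_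
    rintro _ ⟨lam, hlam, rfl⟩
    refine le_csInf ⟨_, x₀, hx₀, rfl⟩ ?_
    rintro _ ⟨x, hx, rfl⟩
    exact csInf_le_of_le hP_inf_bdd ⟨x, hx, rfl⟩ (hweak lam hlam x hx)
  · refine le_csInf ⟨_, x₀, hx₀, rfl⟩ ?_
    rintro _ ⟨x, hx, rfl⟩
    obtain ⟨lam, hlam, hle⟩ := exists_multiplier_of_slater (hf_concy x hx)
      (fun k => hg_concy k x hx) (slater x hx)
      (fun y hy hgy => le_csSup (hP_bdd x hx) ⟨y, hy, hgy, rfl⟩)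
    refine csInf_le_of_le ⟨c, ?_⟩ ⟨lam, hlam, rfl⟩ ?_
    · rintro _ ⟨lam', hlam', rfl⟩
      exact le_csInf ⟨_, x₀, hx₀, rfl⟩ (hD_inf_bdd lam' hlam')
    · refine csInf_le_of_le ⟨c, hD_inf_bdd lam hlam⟩ ⟨x, hx, rfl⟩ ?_
      obtain ⟨y₁, hy₁⟩ := hYne
      refine csSup_le ⟨_, y₁, hy₁, rfl⟩ ?_
      rintro _ ⟨y, hy, rfl⟩
      exact hle y hy
end

section
/- (Theorem 4.3, closed-form optimal KKT multipliers for homogeneous log objectives.) Fix x ∈ ℝ^n. Let f₂ : ℝ^n × ℝ^m → ℝ, f₃ : ℝ^m → ℝ and g_i : ℝ^m × ℝ^n → ℝ (i = 1,…,n) be differentiable in y with y ↦ f₂(x,y), f₃ and y ↦ g_i(y,x) positively homogeneous of degree one (e.g. f₂(x, k·y) = k·f₂(x,y) for all k > 0). Let a, b, c ∈ ℝ^n with c_i ≠ 0 for all i. Suppose Y* = (y₁*,…,y_n*) ∈ (ℝ^m)^n and λ* ∈ ℝ^n satisfy, for every i and every coordinate j, the first-order stationarity condition (a_i / f₂(x,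 y_i*))·∂f₂/∂y_j(x, y_i*) + (b_i / f₃(y_i*))·∂f₃/∂y_j(y_i*) − λ_i*·∂g_i/∂y_j(y_i*, x) = 0 (with f₂(x, y_i*) ≠ 0 and f₃(y_i*) ≠ 0), together with complementary slackness λ_i*·g_i(y_i*, x) = λ_i*·c_i. Then λ_i* = (a_i + b_i)/c_i for all i. -/
/-- **Euler identity** for positively homogeneous functions of degree one. -/
theorem fderiv_apply_self_of_posHomogeneous {E : Type*} [NormedAddCommGroup E] [NormedSpace ℝ E]
    {f : E → ℝ} {y : E} (hf : DifferentiableAt ℝ f y)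
    (hom : ∀ k : ℝ, 0 < k → f (k • y) = k * f y) : fderiv ℝ f y y = f y := by
  have hray : HasDerivAt (fun k : ℝ => k • y) y 1 := by
    simpa using (hasDerivAt_id (1 : ℝ)).smul_const y
  have hchain : HasDerivAt (fun k : ℝ => f (k • y)) (fderiv ℝ f y y) 1 :=
    HasFDerivAt.comp_hasDerivAt (1 : ℝ) (by simpa using hf.hasFDerivAt) hray
  have hlin : HasDerivAt (fun k : ℝ => k * f y) (f y) 1 := by
    simpa using (hasDerivAt_id (1 : ℝ)).mul_const (f y)
  refine hchain.unique (hlin.congr_of_eventuallyEq ?_)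
  filter_upwards [lt_mem_nhds one_pos] with k hk using hom k hk

/-- **Theorem 4.3: closed-form optimal KKT multipliers for homogeneous log objectives.**
Fix `x ∈ ℝ^n`.  With `f₂(x, ·)`, `f₃`, and `g_i(·, x)` differentiable and positively
homogeneous of degree one, if `(Y*, λ*)` satisfies the first-order stationarity
conditions coordinatewise together with complementary slackness
`λ_i* g_i(y_i*, x) = λ_i* c_i`, then `λ_i* = (a_i + b_i)/c_i` for all `i`. -/
theorem kkt_multipliers_closed_form {n m : ℕ}
    (x : EuclideanSpace ℝ (Fin n))
    (f2 : EuclideanSpace ℝ (Fin n) → EuclideanSpace ℝ (Fin m) → ℝ)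
    (f3 : EuclideanSpace ℝ (Fin m) → ℝ)
    (g : Fin n → EuclideanSpace ℝ (Fin m) → EuclideanSpace ℝ (Fin n) → ℝ)
    (hf2_diff : Differentiable ℝ (f2 x))
    (hf3_diff : Differentiable ℝ f3)
    (hg_diff : ∀ i, Differentiable ℝ (fun y => g i y x))
    (hf2_hom : ∀ k : ℝ, 0 < k → ∀ y, f2 x (k • y) = k * f2 x y)
    (hf3_hom : ∀ k : ℝ, 0 < k → ∀ y, f3 (k • y) = k * f3 y)
    (hg_hom : ∀ i, ∀ k : ℝ, 0 < k → ∀ y, g i (k • y) x = k * g i y x)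
    (a b c : Fin n → ℝ) (hc : ∀ i, c i ≠ 0)
    (Ystar : Fin n → EuclideanSpace ℝ (Fin m)) (lam : Fin n → ℝ)
    (hf2_ne : ∀ i, f2 x (Ystar i) ≠ 0) (hf3_ne : ∀ i, f3 (Ystar i) ≠ 0)
    (hstat : ∀ i, ∀ j : Fin m,
      (a i / f2 x (Ystar i)) * fderiv ℝ (f2 x) (Ystar i) (EuclideanSpace.single j 1)
        + (b i / f3 (Ystar i)) * fderiv ℝ f3 (Ystar i) (EuclideanSpace.single j 1)
        - lam i * fderiv ℝ (fun y => g i y x) (Ystar i) (EuclideanSpace.single j 1) = 0)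
    (hcs : ∀ i, lam i * g i (Ystar i) x = lam i * c i) :
    ∀ i, lam i = (a i + b i) / c i := by
  intro i
  have hzero : ((a i / f2 x (Ystar i)) • fderiv ℝ (f2 x) (Ystar i)
      + (b i / f3 (Ystar i)) • fderiv ℝ f3 (Ystar i)
      - lam i • fderiv ℝ (fun y => g i y x) (Ystar i)).toLinearMap = 0 :=
    (EuclideanSpace.basisFun (Fin m) ℝ).toBasis.ext fun j => by simpa using hstat i j
  have hy := LinearMap.congr_fun hzero (Ystar i)
  simp only [ContinuousLinearMap.coe_coe, sub_apply, add_apply, smul_apply,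
    smul_eq_mul, LinearMap.zero_apply,
    fderiv_apply_self_of_posHomogeneous (hf2_diff _) fun k hk => hf2_hom k hk (Ystar i),
    fderiv_apply_self_of_posHomogeneous (hf3_diff _) fun k hk => hf3_hom k hk (Ystar i),
    fderiv_apply_self_of_posHomogeneous (hg_diff i _) fun k hk => hg_hom i k hk (Ystar i),
    div_mul_cancel₀ _ (hf2_ne i), div_mul_cancel₀ _ (hf3_ne i), hcs i] at hy
  rw [eq_div_iff (hc i)]
  linarith
end

section
/- (Corollary 5.1, optimal KKT multipliers for the Fisher market program are all one.) Consider a Fisher market with n buyers and m goods, budgets b ∈ ℝ^n with b_i > 0, prices p ∈ ℝ^m with p ≥ 0, and utility functions u_i : ℝ^m → ℝ that are differentiable and positively homogeneous of degree one (u_i(k·z) = k·u_i(z) for all k > 0). Suppose allocations X* = (x₁*,…,x_n*) ∈ (ℝ^m)^n and multipliers λ* ∈ ℝ^n satisfy, for every buyer i and every good j, the stationarity condition (b_i / u_i(x_i*))·∂u_i/∂x_j(x_i*) = λ_i*·p_j (with u_i(x_i*) ≠ 0), together with complementary slackness λ_i*·(b_i − x_i*·p) = 0. Then λ_i* = 1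 for all i. -/
/-- **Euler's identity**: a function that is positively homogeneous of degree one satisfies
`f'(x) x = f x` wherever it is differentiable. -/
theorem fderiv_apply_self_of_pos_homogeneous {E : Type*} [NormedAddCommGroup E]
    [NormedSpace ℝ E] {f : E → ℝ} {x : E} (hf : DifferentiableAt ℝ f x)
    (hom : ∀ k : ℝ, 0 < k → f (k • x) = k * f x) : fderiv ℝ f x x = f x := by
  have hray : HasDerivAt (fun t : ℝ => t • x) x 1 := by
    simpa using (hasDerivAt_id (1 : ℝ)).smul_const x
  have hcomp : HasDerivAt (fun t : ℝ => f (t • x)) (fderiv ℝ f x x) 1 := by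
    have hf' : HasFDerivAt f (fderiv ℝ f x) ((1 : ℝ) • x) := by
      simpa using hf.hasFDerivAt
    exact hf'.comp_hasDerivAt (1 : ℝ) hray
  have hlin : HasDerivAt (fun t : ℝ => t * f x) (f x) 1 := by
    simpa using (hasDerivAt_id (1 : ℝ)).mul_const (f x)
  refine hcomp.unique (hlin.congr_of_eventuallyEq ?_)
  filter_upwards [lt_mem_nhds (zero_lt_one' ℝ)] with t ht using hom t ht

/-- A linear functional on Euclidean space is determined by its values on the standard basis. -/
theorem EuclideanSpace.clm_apply_eq_sum {ι : Type*} [Fintype ι] [DecidableEq ι]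
    (L : EuclideanSpace ℝ ι →L[ℝ] ℝ) (x : EuclideanSpace ℝ ι) :
    L x = ∑ j, x j * L (EuclideanSpace.single j 1) := by
  conv_lhs => rw [← (EuclideanSpace.basisFun ι ℝ).sum_repr x]
  simp

/-- **Corollary 5.1: the optimal KKT multipliers for the Fisher-market program are all 1.**
With positive budgets `b i`, nonnegative prices `p`, and differentiable utilities `u i`
positively homogeneous of degree one, if allocations `X*` and multipliers `λ*` satisfy
the stationarity conditions `(b_i / u_i(x_i*)) ∂u_i/∂x_j(x_i*) = λ_i* p_j` together with
complementary slackness `λ_i* (b_i - x_i*·p) = 0`, then `λ_i* = 1` for all `i`. -/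
theorem fisher_market_kkt_multipliers_eq_one {n m : ℕ}
    (b : Fin n → ℝ) (hb : ∀ i, 0 < b i)
    (p : EuclideanSpace ℝ (Fin m)) (hp : ∀ j, 0 ≤ p j)
    (u : Fin n → EuclideanSpace ℝ (Fin m) → ℝ)
    (hu_diff : ∀ i, Differentiable ℝ (u i))
    (hu_hom : ∀ i, ∀ k : ℝ, 0 < k → ∀ z, u i (k • z) = k * u i z)
    (Xstar : Fin n → EuclideanSpace ℝ (Fin m)) (lam : Fin n → ℝ)
    (hu_ne : ∀ i, u i (Xstar i) ≠ 0)
    (hstat : ∀ i, ∀ j : Fin m,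
      (b i / u i (Xstar i)) * fderiv ℝ (u i) (Xstar i) (EuclideanSpace.single j 1)
        = lam i * p j)
    (hcs : ∀ i, lam i * (b i - ∑ j, Xstar i j * p j) = 0) :
    ∀ i, lam i = 1 := by
  intro i
  have euler : ∑ j, Xstar i j * fderiv ℝ (u i) (Xstar i) (EuclideanSpace.single j 1)
      = u i (Xstar i) := by
    rw [← EuclideanSpace.clm_apply_eq_sum]
    exact fderiv_apply_self_of_pos_homogeneous (hu_diff i _) fun k hk => hu_hom i k hk _
  have spending : b i = lam i * ∑ j, Xstar i j * p j := by
    calc b i = b i / u i (Xstar i) * u i (Xstar i) := (div_mul_cancel₀ _ (hu_ne i)).symm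
      _ = b i / u i (Xstar i) *
          ∑ j, Xstar i j * fderiv ℝ (u i) (Xstar i) (EuclideanSpace.single j 1) := by rw [euler]
      _ = lam i * ∑ j, Xstar i j * p j := by
        rw [Finset.mul_sum, Finset.mul_sum]
        refine Finset.sum_congr rfl fun j _ => ?_
        rw [mul_left_comm, hstat, mul_left_comm]
  refine mul_right_cancel₀ (hb i).ne' ?_
  linarith [hcs i]
end

section
/- (Example 1.1, non-convergence of simultaneous GDA.) Define sequences by x_0 = y_0 = 0, x_{t+1} = proj_{[−1,1]}(x_t − 2x_t), and y_{t+1} = proj_{{ y ∈ [−1,1] : y ≤ 1 − x_t }}(y_t + 1). Then (x_t, y_t) = (0, 1) for all t ≥ 1; moreover (0,1) is a fixed point of this update yet is not a Stackelberg equilibrium of the game min_{x ∈ [−1,1]} max{ x² + y + 1 : y ∈ [−1,1], 1 − (x + y) ≥ 0 }, since f(0,1) = 2 > 7/4 = inf_{x∈[−1,1]} sup{ x² + y + 1 : y ∈ [−1,1], y ≤ 1 − x }. -/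
/-- The value function of the inner maximization: the best response to `x` is `min 1 (1 - x)`. -/
theorem isGreatest_innerValues {x : ℝ} (hx : x ∈ Set.Icc (-1 : ℝ) 1) :
    IsGreatest {w : ℝ | ∃ y ∈ Set.Icc (-1 : ℝ) 1, y ≤ 1 - x ∧ w = x ^ 2 + y + 1}
      (x ^ 2 + min 1 (1 - x) + 1) := by
  obtain ⟨_, hx1⟩ := hx
  refine ⟨⟨min 1 (1 - x), ⟨le_min (by norm_num) (by linarith), min_le_left _ _⟩,
    min_le_right _ _, rfl⟩, ?_⟩
  rintro w ⟨y, ⟨_, hy1⟩, hyx, rfl⟩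
  linarith [le_min hy1 hyx]

/-- The Stackelberg value `7 / 4` is attained at `x = 1 / 2`. -/
theorem isLeast_outerValues :
    IsLeast {v : ℝ | ∃ x ∈ Set.Icc (-1 : ℝ) 1,
      v = sSup {w : ℝ | ∃ y ∈ Set.Icc (-1 : ℝ) 1, y ≤ 1 - x ∧ w = x ^ 2 + y + 1}} (7 / 4) := by
  constructor
  · have hmem : (1 / 2 : ℝ) ∈ Set.Icc (-1 : ℝ) 1 := by constructor <;> norm_num
    refine ⟨1 / 2, hmem, ?_⟩
    rw [(isGreatest_innerValues hmem).csSup_eq, min_eq_right (by norm_num)]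
    norm_num
  · rintro v ⟨x, hx, rfl⟩
    rw [(isGreatest_innerValues hx).csSup_eq]
    rcases min_cases (1 : ℝ) (1 - x) with ⟨h, _⟩ | ⟨h, _⟩ <;> rw [h] <;>
      nlinarith [sq_nonneg x, sq_nonneg (x - 1 / 2)]

/-- **Example 1.1: non-convergence of simultaneous GDA.**
With updates `x_{t+1} = proj_{[-1,1]}(x_t - 2x_t)` and
`y_{t+1} = proj_{{y ∈ [-1,1] : y ≤ 1 - x_t}}(y_t + 1)` started at `(0, 0)`, the iterates
equal `(0, 1)` for all `t ≥ 1`; moreover `(0, 1)` is a fixed point of the update, yet it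
is not a Stackelberg equilibrium of
`min_{x ∈ [-1,1]} max {x² + y + 1 : y ∈ [-1,1], 1 - (x + y) ≥ 0}`, since
`f(0, 1) = 2 > 7/4 = inf_{x ∈ [-1,1]} sup {x² + y + 1 : y ∈ [-1,1], y ≤ 1 - x}`.
(Here `proj_{[a,b]}(w) = max a (min b w)`.) -/
theorem example_1_1_gda_non_convergence (x y : ℕ → ℝ)
    (hx0 : x 0 = 0) (hy0 : y 0 = 0)
    (hxupd : ∀ t, x (t + 1) = max (-1) (min 1 (x t - 2 * x t)))
    (hyupd : ∀ t, y (t + 1) = max (-1) (min (min 1 (1 - x t)) (y t + 1))) :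
    (∀ t, 1 ≤ t → x t = 0 ∧ y t = 1)
    ∧ (max (-1 : ℝ) (min 1 ((0 : ℝ) - 2 * 0)) = 0
        ∧ max (-1 : ℝ) (min (min 1 (1 - (0 : ℝ))) ((1 : ℝ) + 1)) = 1)
    ∧ ((0 : ℝ) ^ 2 + 1 + 1 = 2)
    ∧ (sInf {v : ℝ | ∃ x' ∈ Set.Icc (-1 : ℝ) 1,
        v = sSup {w : ℝ | ∃ y' ∈ Set.Icc (-1 : ℝ) 1, y' ≤ 1 - x' ∧ w = x' ^ 2 + y' + 1}}
          = 7 / 4)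
    ∧ ¬ ((0 : ℝ) ^ 2 + 1 + 1 ≤ sInf {v : ℝ | ∃ x' ∈ Set.Icc (-1 : ℝ) 1,
        v = sSup {w : ℝ | ∃ y' ∈ Set.Icc (-1 : ℝ) 1, y' ≤ 1 - x' ∧ w = x' ^ 2 + y' + 1}}) := by
  refine ⟨fun t ht => ?_, ⟨by norm_num, by norm_num⟩, by norm_num,
    isLeast_outerValues.csInf_eq, ?_⟩
  · induction t, ht using Nat.le_induction with
    | base =>
      have hx1 := hxupd 0
      have hy1 := hyupd 0
      norm_num [hx0, hy0] at hx1 hy1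
      exact ⟨hx1, hy1⟩
    | succ n _ ih => constructor <;> norm_num [hxupd n, hyupd n, ih.1, ih.2]
  · rw [isLeast_outerValues.csInf_eq]
    norm_num
end

section
/- (Example 3.1, non-convergence of gradient descent descent ascent (G2DA).) Consider the update map F(λ, x, y) = ( max(0, λ − 1 + x + y), proj_{[−1,1]}(−x + λ), proj_{[−1,1]}(y + 1 − λ) ), obtained by applying G2DA with all step sizes equal to 1 to the Lagrangian L(x, y, λ) = x² + y + λ(1 − (x + y)) of the game min_{x∈[−1,1]} max{ x² + y + 1 : y ∈ [−1,1], 1 − (x + y) ≥ 0 }. Then F(0,0,0) = (0,0,1) and F(0,0,1) = (0,0,1), so the iterates started at (0,0,0) equal (0,0,1) for all t ≥ 1; and the strategy pair (x, y) = (0, 1) is not a Stackelberg equilibrium of the game, whose unique optimum is (λ*, x*, y*) = (1, 1/2, 1/2). -/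
/-- The G2DA update map for the game of Example 3.1, obtained by applying gradient
descent descent ascent with all step sizes equal to `1` to the Lagrangian
`L(x, y, λ) = x² + y + λ(1 - (x + y))`:
`F(λ, x, y) = (max 0 (λ - 1 + x + y), proj_{[-1,1]}(-x + λ), proj_{[-1,1]}(y + 1 - λ))`. -/
noncomputable def g2daUpdate : ℝ × ℝ × ℝ → ℝ × ℝ × ℝ :=
  fun p => (max 0 (p.1 - 1 + p.2.1 + p.2.2),
            max (-1) (min 1 (-p.2.1 + p.1)),
            max (-1) (min 1 (p.2.2 + 1 - p.1)))

/-- The value of the follower's constrained problem at `x`. -/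
theorem sSup_constrained_eq {x : ℝ} (hx : x ∈ Set.Icc (-1 : ℝ) 1) :
    sSup {w : ℝ | ∃ y ∈ Set.Icc (-1 : ℝ) 1, 0 ≤ 1 - (x + y) ∧ w = x ^ 2 + y + 1}
      = x ^ 2 + min 1 (1 - x) + 1 := by
  refine IsGreatest.csSup_eq ⟨⟨min 1 (1 - x), ⟨?_, min_le_left _ _⟩, ?_, rfl⟩, ?_⟩
  · exact le_min (by norm_num) (by linarith [hx.2])
  · linarith [min_le_right 1 (1 - x)]
  · rintro w ⟨y, hy, hxy, rfl⟩
    have : y ≤ min 1 (1 - x) := le_min hy.2 (by linarith)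
    linarith

theorem seven_quarters_le_value (x : ℝ) :
    7 / 4 ≤ x ^ 2 + min 1 (1 - x) + 1 := by
  rcases min_cases 1 (1 - x) with ⟨h, h'⟩ | ⟨h, h'⟩ <;> rw [h] <;>
    nlinarith [sq_nonneg (x - 1 / 2)]

/-- The leader's optimal value. -/
theorem sInf_constrained_eq :
    sInf {v : ℝ | ∃ x ∈ Set.Icc (-1 : ℝ) 1,
      v = sSup {w : ℝ | ∃ y ∈ Set.Icc (-1 : ℝ) 1, 0 ≤ 1 - (x + y) ∧ w = x ^ 2 + y + 1}}
      = 7 / 4 := by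
  refine IsLeast.csInf_eq ⟨⟨1 / 2, by norm_num, ?_⟩, ?_⟩
  · rw [sSup_constrained_eq (by norm_num), min_eq_right (by norm_num)]
    norm_num
  · rintro v ⟨x, hx, rfl⟩
    rw [sSup_constrained_eq hx]
    exact seven_quarters_le_value x

/-- The maximum of the Lagrangian over `y ∈ [-1, 1]`. -/
theorem sSup_lagrangian_eq (lam x : ℝ) :
    sSup {w : ℝ | ∃ y ∈ Set.Icc (-1 : ℝ) 1, w = x ^ 2 + y + 1 + lam * (1 - (x + y))}
      = x ^ 2 + 1 + lam * (1 - x) + |1 - lam| := by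
  refine IsGreatest.csSup_eq ⟨?_, ?_⟩
  · rcases abs_cases (1 - lam) with ⟨h, -⟩ | ⟨h, -⟩ <;> rw [h]
    · exact ⟨1, by norm_num, by ring⟩
    · exact ⟨-1, by norm_num, by ring⟩
  · rintro w ⟨y, hy, rfl⟩
    have : (1 - lam) * y ≤ |1 - lam| := by
      calc (1 - lam) * y ≤ |(1 - lam) * y| := le_abs_self _
        _ = |1 - lam| * |y| := abs_mul _ _
        _ ≤ |1 - lam| * 1 := by gcongr; exact abs_le.2 hy
        _ = |1 - lam| := mul_one _
    linarith

theorem lagrangian_value_ge {lam x : ℝ} (hlam : 0 ≤ lam) (hx : x ≤ 1) :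
    7 / 4 ≤ x ^ 2 + 1 + lam * (1 - x) + |1 - lam| := by
  rcases abs_cases (1 - lam) with ⟨h, h'⟩ | ⟨h, h'⟩ <;> rw [h]
  · nlinarith [sq_nonneg (x - lam / 2)]
  · nlinarith [sq_nonneg (x - 1 / 2)]

theorem eq_of_lagrangian_value_eq {lam x : ℝ} (hlam : 0 ≤ lam) (hx : x ≤ 1)
    (heq : x ^ 2 + 1 + lam * (1 - x) + |1 - lam| = 7 / 4) : lam = 1 ∧ x = 1 / 2 := by
  have hlam_eq : lam = 1 := by
    rcases abs_cases (1 - lam) with ⟨h, h'⟩ | ⟨h, h'⟩ <;> rw [h] at heq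
    · nlinarith [sq_nonneg (x - lam / 2)]
    · nlinarith [sq_nonneg (x - 1 / 2)]
  subst hlam_eq
  refine ⟨rfl, ?_⟩
  have : (x - 1 / 2) ^ 2 = 0 := by
    rw [sub_self, abs_zero] at heq
    linarith
  linarith [pow_eq_zero_iff (two_ne_zero) |>.1 this]

/-- The optimal value of the Lagrangian dual. -/
theorem sInf_lagrangian_eq :
    sInf {v : ℝ | ∃ lam : ℝ, 0 ≤ lam ∧ ∃ x ∈ Set.Icc (-1 : ℝ) 1,
      v = sSup {w : ℝ | ∃ y ∈ Set.Icc (-1 : ℝ) 1, w = x ^ 2 + y + 1 + lam * (1 - (x + y))}}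
      = 7 / 4 := by
  refine IsLeast.csInf_eq ⟨⟨1, zero_le_one, 1 / 2, by norm_num, ?_⟩, ?_⟩
  · rw [sSup_lagrangian_eq]
    norm_num
  · rintro v ⟨lam, hlam, x, hx, rfl⟩
    rw [sSup_lagrangian_eq]
    exact lagrangian_value_ge hlam hx.2

theorem g2daUpdate_zero : g2daUpdate (0, 0, 0) = (0, 0, 1) := by
  norm_num [g2daUpdate]

theorem g2daUpdate_fixed : g2daUpdate (0, 0, 1) = (0, 0, 1) := by
  norm_num [g2daUpdate]

/-- **Example 3.1: non-convergence of gradient descent descent ascent (G2DA).**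
`F(0,0,0) = (0,0,1)` and `F(0,0,1) = (0,0,1)`, so the iterates started at `(0,0,0)` equal
`(0,0,1)` for all `t ≥ 1`; the strategy pair `(x, y) = (0, 1)` is not a Stackelberg
equilibrium of `min_{x ∈ [-1,1]} max {x² + y + 1 : y ∈ [-1,1], 1 - (x + y) ≥ 0}`; and
the unique optimum of the game is `(λ*, x*, y*) = (1, 1/2, 1/2)`. -/
theorem example_3_1_g2da_non_convergence :
    g2daUpdate (0, 0, 0) = (0, 0, 1)
    ∧ g2daUpdate (0, 0, 1) = (0, 0, 1)
    ∧ (∀ t : ℕ, 1 ≤ t → g2daUpdate^[t] (0, 0, 0) = (0, 0, 1))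
    -- (x, y) = (0, 1) is not a Stackelberg equilibrium of the game:
    ∧ ¬ (sSup {w : ℝ | ∃ y ∈ Set.Icc (-1 : ℝ) 1, 0 ≤ 1 - ((0 : ℝ) + y)
              ∧ w = (0 : ℝ) ^ 2 + y + 1} ≤ (0 : ℝ) ^ 2 + 1 + 1
          ∧ (0 : ℝ) ^ 2 + 1 + 1 ≤ sInf {v : ℝ | ∃ x ∈ Set.Icc (-1 : ℝ) 1,
              v = sSup {w : ℝ | ∃ y ∈ Set.Icc (-1 : ℝ) 1, 0 ≤ 1 - (x + y)
                ∧ w = x ^ 2 + y + 1}})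
    -- (x*, y*) = (1/2, 1/2) is a Stackelberg equilibrium of the game, and it is unique:
    ∧ ((1 / 2 : ℝ) ∈ Set.Icc (-1 : ℝ) 1 ∧ (1 / 2 : ℝ) ∈ Set.Icc (-1 : ℝ) 1
        ∧ 0 ≤ 1 - ((1 / 2 : ℝ) + (1 / 2 : ℝ))
        ∧ sSup {w : ℝ | ∃ y ∈ Set.Icc (-1 : ℝ) 1, 0 ≤ 1 - ((1 / 2 : ℝ) + y)
            ∧ w = (1 / 2 : ℝ) ^ 2 + y + 1} ≤ (1 / 2 : ℝ) ^ 2 + 1 / 2 + 1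
        ∧ (1 / 2 : ℝ) ^ 2 + 1 / 2 + 1 ≤ sInf {v : ℝ | ∃ x ∈ Set.Icc (-1 : ℝ) 1,
            v = sSup {w : ℝ | ∃ y ∈ Set.Icc (-1 : ℝ) 1, 0 ≤ 1 - (x + y)
              ∧ w = x ^ 2 + y + 1}})
    ∧ (∀ xs ∈ Set.Icc (-1 : ℝ) 1, ∀ ys ∈ Set.Icc (-1 : ℝ) 1, 0 ≤ 1 - (xs + ys) →
        (sSup {w : ℝ | ∃ y ∈ Set.Icc (-1 : ℝ) 1, 0 ≤ 1 - (xs + y) ∧ w = xs ^ 2 + y + 1}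
            ≤ xs ^ 2 + ys + 1
          ∧ xs ^ 2 + ys + 1 ≤ sInf {v : ℝ | ∃ x ∈ Set.Icc (-1 : ℝ) 1,
              v = sSup {w : ℝ | ∃ y ∈ Set.Icc (-1 : ℝ) 1, 0 ≤ 1 - (x + y)
                ∧ w = x ^ 2 + y + 1}}) →
        xs = 1 / 2 ∧ ys = 1 / 2)
    -- λ* = 1 is the unique optimal multiplier, attained jointly with x* = 1/2:
    ∧ (sSup {w : ℝ | ∃ y ∈ Set.Icc (-1 : ℝ) 1,
          w = (1 / 2 : ℝ) ^ 2 + y + 1 + 1 * (1 - (1 / 2 + y))}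
        = sInf {v : ℝ | ∃ lam : ℝ, 0 ≤ lam ∧ ∃ x ∈ Set.Icc (-1 : ℝ) 1,
            v = sSup {w : ℝ | ∃ y ∈ Set.Icc (-1 : ℝ) 1,
              w = x ^ 2 + y + 1 + lam * (1 - (x + y))}})
    ∧ (∀ lam : ℝ, 0 ≤ lam → ∀ x ∈ Set.Icc (-1 : ℝ) 1,
        sSup {w : ℝ | ∃ y ∈ Set.Icc (-1 : ℝ) 1, w = x ^ 2 + y + 1 + lam * (1 - (x + y))}
          = sInf {v : ℝ | ∃ lam' : ℝ, 0 ≤ lam' ∧ ∃ x' ∈ Set.Icc (-1 : ℝ) 1,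
              v = sSup {w : ℝ | ∃ y ∈ Set.Icc (-1 : ℝ) 1,
                w = x' ^ 2 + y + 1 + lam' * (1 - (x' + y))}} →
        lam = 1 ∧ x = 1 / 2) := by
  refine ⟨g2daUpdate_zero, g2daUpdate_fixed, ?_, ?_, ?_, ?_, ?_, ?_⟩
  · intro t ht
    obtain ⟨n, rfl⟩ := Nat.exists_eq_add_of_le' ht
    rw [Function.iterate_succ_apply, g2daUpdate_zero,
      Function.iterate_fixed g2daUpdate_fixed]
  · rw [sInf_constrained_eq]
    norm_num
  · rw [sInf_constrained_eq, sSup_constrained_eq (by norm_num), min_eq_right (by norm_num)]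
    norm_num
  · rintro x hx y hy hxy ⟨hsup, hinf⟩
    rw [sSup_constrained_eq hx] at hsup
    rw [sInf_constrained_eq] at hinf
    have hx_eq : x = 1 / 2 := by
      rcases min_cases 1 (1 - x) with ⟨h, h'⟩ | ⟨h, h'⟩ <;> rw [h] at hsup
      · nlinarith [sq_nonneg x]
      · have : (x - 1 / 2) ^ 2 = 0 :=
          le_antisymm (by linarith) (sq_nonneg _)
        linarith [pow_eq_zero_iff (two_ne_zero) |>.1 this]
    subst hx_eq
    rw [min_eq_right (by norm_num)] at hsup
    exact ⟨rfl, by linarith⟩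
  · rw [sInf_lagrangian_eq, sSup_lagrangian_eq]
    norm_num
  · intro lam hlam x hx heq
    rw [sInf_lagrangian_eq, sSup_lagrangian_eq] at heq
    exact eq_of_lagrangian_value_eq hlam hx.2 heq
end

section
/- (Example 4.1, LGDA cycles but its average iterates equal the Stackelberg equilibrium.) For the game min_{x ∈ [−1,1]} max{ x² − y² + 1 : y ∈ [−1,1], 1 − (x + y) ≥ 0 }, the Lagrangian with the optimal multiplier λ* = 0 is L(x,y,0) = x² − y² + 1, and Lagrangian GDA with unit step sizes gives the update x_{t+1} = proj_{[−1,1]}(x_t − 2x_t), y_{t+1} = proj_{[−1,1]}(y_t − 2y_t). Started from (x_0, y_0) = (1, 1), the iterates satisfy (x_t, y_t) = ((−1)^t, (−1)^t) for all t ≥ 0, so they cycle with period 2 and do not converge; yet for every k ≥ 1 the average over an even number of iterates satisfies (1/(2k)) Σ_{t=1}^{2k} (x_t, y_t) = (0, 0), which is the Stackelberg equilibrium of the game. -/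
/-- Projected gradient steps `u ↦ proj_{[-1,1]}(u - 2u)` started at `1` alternate in sign. -/
lemma eq_neg_one_pow_of_clamp_step {u : ℕ → ℝ} (h0 : u 0 = 1)
    (hstep : ∀ t, u (t + 1) = max (-1) (min 1 (u t - 2 * u t))) (t : ℕ) :
    u t = (-1 : ℝ) ^ t := by
  induction t with
  | zero => simp [h0]
  | succ t ih =>
    rw [hstep, ih, pow_succ]
    rcases neg_one_pow_eq_or ℝ t with h | h <;> rw [h] <;> norm_num

lemma not_tendsto_neg_one_pow (l : ℝ) :
    ¬ Filter.Tendsto (fun t : ℕ => (-1 : ℝ) ^ t) Filter.atTop (nhds l) := by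
  intro h
  have hsucc := h.comp (Filter.tendsto_add_atTop_nat 1)
  have hneg : Filter.Tendsto (fun t : ℕ => (-1 : ℝ) ^ (t + 1)) Filter.atTop (nhds (-l)) := by
    simpa [pow_succ] using h.neg
  have hl : l = -l := tendsto_nhds_unique hsucc hneg
  have habs : Filter.Tendsto (fun _ : ℕ => (1 : ℝ)) Filter.atTop (nhds |l|) := by
    simpa using h.abs
  have hl1 : (1 : ℝ) = |l| := tendsto_nhds_unique tendsto_const_nhds habs
  have hl0 : l = 0 := by linarith
  simp [hl0] at hl1

lemma sum_Icc_neg_one_pow_two_mul (k : ℕ) :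
    ∑ t ∈ Finset.Icc 1 (2 * k), (-1 : ℝ) ^ t = 0 := by
  induction k with
  | zero => simp
  | succ k ih =>
    rw [show 2 * (k + 1) = 2 * k + 1 + 1 by ring, Finset.sum_Icc_succ_top (by omega),
      Finset.sum_Icc_succ_top (by omega), ih]
    simp [pow_succ]

/-- The follower's response `y' = 0` is feasible for every `x' ≤ 1`. -/
lemma one_le_sSup_follower_values {x' : ℝ} (hx' : x' ≤ 1) :
    1 ≤ sSup {w : ℝ | ∃ y' ∈ Set.Icc (-1 : ℝ) 1, 0 ≤ 1 - (x' + y')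
      ∧ w = x' ^ 2 - y' ^ 2 + 1} := by
  refine le_csSup_of_le (b := x' ^ 2 + 1) ⟨x' ^ 2 + 1, ?_⟩ ⟨0, by norm_num, by linarith, by ring⟩
    (by nlinarith [sq_nonneg x'])
  rintro w ⟨y', -, -, rfl⟩
  nlinarith [sq_nonneg y']

/-- **Example 4.1: LGDA cycles, but its average iterates equal the Stackelberg
equilibrium.**  For the game
`min_{x ∈ [-1,1]} max {x² - y² + 1 : y ∈ [-1,1], 1 - (x + y) ≥ 0}`, the Lagrangian with
the optimal multiplier `λ* = 0` is `L(x, y, 0) = x² - y² + 1`, and Lagrangian GDA with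
unit step sizes gives `x_{t+1} = proj_{[-1,1]}(x_t - 2x_t)`,
`y_{t+1} = proj_{[-1,1]}(y_t - 2y_t)`.  Started from `(1, 1)`, the iterates satisfy
`(x_t, y_t) = ((-1)^t, (-1)^t)`, so they cycle with period 2 and do not converge; yet for
every `k ≥ 1` the average over an even number of iterates,
`(1/(2k)) ∑_{t=1}^{2k} (x_t, y_t)`, equals `(0, 0)`, which is the Stackelberg equilibrium
of the game. -/
theorem example_4_1_lgda_cycles_average_converges (x y : ℕ → ℝ)
    (hx0 : x 0 = 1) (hy0 : y 0 = 1)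
    (hxupd : ∀ t, x (t + 1) = max (-1) (min 1 (x t - 2 * x t)))
    (hyupd : ∀ t, y (t + 1) = max (-1) (min 1 (y t - 2 * y t))) :
    -- the Lagrangian with λ* = 0 is x² - y² + 1
    (∀ x' y' : ℝ, x' ^ 2 - y' ^ 2 + 1 + 0 * (1 - (x' + y')) = x' ^ 2 - y' ^ 2 + 1)
    -- explicit form of the iterates
    ∧ (∀ t, x t = (-1 : ℝ) ^ t ∧ y t = (-1 : ℝ) ^ t)
    -- the iterates cycle with period 2 and do not converge
    ∧ (∀ t, x (t + 2) = x t ∧ y (t + 2) = y t)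
    ∧ (∀ t, x (t + 1) ≠ x t)
    ∧ (¬ ∃ l : ℝ × ℝ, Filter.Tendsto (fun t => (x t, y t)) Filter.atTop (nhds l))
    -- averages over an even number of iterates are (0, 0)
    ∧ (∀ k : ℕ, 1 ≤ k →
        (1 / (2 * k : ℝ)) * ∑ t ∈ Finset.Icc 1 (2 * k), x t = 0
        ∧ (1 / (2 * k : ℝ)) * ∑ t ∈ Finset.Icc 1 (2 * k), y t = 0)
    -- (0, 0) is a Stackelberg equilibrium of the game
    ∧ ((0 : ℝ) ∈ Set.Icc (-1 : ℝ) 1 ∧ (0 : ℝ) ∈ Set.Icc (-1 : ℝ) 1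
        ∧ 0 ≤ 1 - ((0 : ℝ) + (0 : ℝ))
        ∧ sSup {w : ℝ | ∃ y' ∈ Set.Icc (-1 : ℝ) 1, 0 ≤ 1 - ((0 : ℝ) + y')
            ∧ w = (0 : ℝ) ^ 2 - y' ^ 2 + 1} ≤ (0 : ℝ) ^ 2 - (0 : ℝ) ^ 2 + 1
        ∧ (0 : ℝ) ^ 2 - (0 : ℝ) ^ 2 + 1 ≤ sInf {v : ℝ | ∃ x' ∈ Set.Icc (-1 : ℝ) 1,
            v = sSup {w : ℝ | ∃ y' ∈ Set.Icc (-1 : ℝ) 1, 0 ≤ 1 - (x' + y')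
              ∧ w = x' ^ 2 - y' ^ 2 + 1}}) := by
  have hx := eq_neg_one_pow_of_clamp_step hx0 hxupd
  have hy := eq_neg_one_pow_of_clamp_step hy0 hyupd
  refine ⟨fun _ _ => by ring, fun t => ⟨hx t, hy t⟩, fun t => ?_, fun t => ?_, ?_,
    fun k _ => ?_, by norm_num, by norm_num, by norm_num, ?_, ?_⟩
  · simp [hx, hy, pow_add]
  · rw [hx, hx, pow_succ]
    rcases neg_one_pow_eq_or ℝ t with h | h <;> rw [h] <;> norm_num
  · rintro ⟨l, hl⟩
    refine not_tendsto_neg_one_pow l.1 ?_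
    simpa only [hx] using hl.fst_nhds
  · simp only [hx, hy, sum_Icc_neg_one_pow_two_mul, mul_zero, and_self]
  · refine csSup_le ⟨_, 0, by norm_num, by norm_num, rfl⟩ ?_
    rintro w ⟨y', -, -, rfl⟩
    nlinarith [sq_nonneg y']
  · refine le_csInf ⟨_, 0, by norm_num, rfl⟩ ?_
    rintro v ⟨x', hx', rfl⟩
    simpa using one_le_sSup_follower_values hx'.2
end
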